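/- For W = x_1⁴ + x_2⁴ − y_1⁵ − y_1y_2⁵ − y_2y_3⁶ (a Delsarte polynomial in 5 variables with weights (25,25,20,16,14) and degree 100), the quotient S̃L(W) = SL(W)/J_W has order 2 and is generated by the class of the involution ν = diag(i, −i, 1, 1, 1); here SL(W) is the group of diagonal matrices diag(a_1,a_2,b_1,b_2,b_3) with a_1⁴ = a_2⁴ = b_1⁵ = 1, b_1b_2⁵ = 1, b_2b_3⁶ = 1 and a_1a_2b_1b_2b_3 = 1. -/

import Mathlib

open Complex BigOperators Matrix

noncomputable section

namespace BV

/-- The Delsarte polynomial function attached to an exponent matrix `A`. -/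
def wfun {ι : Type*} [Fintype ι] (A : Matrix ι ι ℕ) (x : ι → ℂ) : ℂ :=
  ∑ i, ∏ j, x j ^ A i j

/-- The group `Aut(P)` of diagonal symmetries of a function `P : (ι → ℂ) → ℂ`. -/
def autP {ι : Type*} (P : (ι → ℂ) → ℂ) : Subgroup (ι → ℂˣ) where
  carrier := {lam | ∀ x : ι → ℂ, P (fun j => (lam j : ℂ) * x j) = P x}
  one_mem' := by intro x; simp
  mul_mem' := by
    intro a b ha hb x
    have h1 := ha fun j => (b j : ℂ) * x j
    have h2 := hb x
    have h3 : (fun j => ((a * b) j : ℂ) * x j) = fun j => (a j : ℂ) * ((b j : ℂ) * x j) := by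
      funext j; simp [mul_assoc]
    rw [h3, h1, h2]
  inv_mem' := by
    intro a ha x
    have h := (ha fun j => (((a j)⁻¹ : ℂˣ) : ℂ) * x j).symm
    have h2 : (fun j => (a j : ℂ) * ((((a j)⁻¹ : ℂˣ) : ℂ) * x j)) = x := by
      funext j; exact Units.mul_inv_cancel_left (a j) (x j)
    rw [h2] at h
    simpa using h

/-- The product-of-entries homomorphism (the determinant of a diagonal matrix). -/
def prodHom (ι : Type*) [Fintype ι] : (ι → ℂˣ) →* ℂˣ where
  toFun lam := ∏ j, lam j
  map_one' := by simp
  map_mul' a b := by simp [Finset.prod_mul_distrib]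

/-- The group `SL(P)` of diagonal symmetries of determinant one. -/
def slP {ι : Type*} [Fintype ι] (P : (ι → ℂ) → ℂ) : Subgroup (ι → ℂˣ) :=
  autP P ⊓ (prodHom ι).ker

/-- `exp(2 π i v)` as a unit of `ℂ`. -/
def eU (v : ℚ) : ℂˣ := Units.mk0 (Complex.exp (2 * (Real.pi : ℂ) * Complex.I * (v : ℂ)))
  (Complex.exp_ne_zero _)

/-- The element `j_W` attached to a charge vector `q`. -/
def jW {ι : Type*} (q : ι → ℚ) : ι → ℂˣ := fun j => eU (q j)

/-- The group `J_W = ⟨j_W⟩`. -/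
def JW {ι : Type*} (q : ι → ℚ) : Subgroup (ι → ℂˣ) := Subgroup.zpowers (jW q)

end BV

/-- `W = x₁⁴ + x₂⁴ − y₁⁵ − y₁y₂⁵ − y₂y₃⁶` as a function. -/
def P17 : (Fin 5 → ℂ) → ℂ :=
  fun z => z 0 ^ 4 + z 1 ^ 4 - z 2 ^ 5 - z 2 * z 3 ^ 5 - z 3 * z 4 ^ 6

/-- The charges `q = (25/100, 25/100, 20/100, 16/100, 14/100)` of `W`, from the weights
`(25,25,20,16,14)` and the degree `100`. -/
def q17 : Fin 5 → ℚ := ![25/100, 25/100, 20/100, 16/100, 14/100]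

/-- `i` as a unit of `ℂ`. -/
def iu : ℂˣ := Units.mk0 Complex.I Complex.I_ne_zero

/-- The involution `ν = diag(i, −i, 1, 1, 1)`. -/
def nu17 : Fin 5 → ℂˣ := ![iu, -iu, 1, 1, 1]

/-!
Distinct monomials are distinct characters, hence linearly independent, so a diagonal matrix
preserves `W` if and only if it preserves each of its monomials. In `SL(W)` the last entry `t`
determines `b₁ = t³⁰` and `b₂ = t⁻⁶`, which leaves `a₁a₂t²⁵ = 1` and `t⁵⁰ = 1`. Hence the character
`a₁ / a₂` of `SL(W)` has values in `{±1}`, and it sends `ν` to `-1`. If `a₁ = a₂ = a`, then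
`s = a³t⁹` is a hundredth root of unity whose powers with exponents the weights
`(25, 25, 20, 16, 14)` are the entries of the matrix, so the kernel of this character is `J_W`.
-/

namespace BV

section Monomials

variable {ι κ M : Type*} [Fintype ι] [CommMonoid M]

/-- The monomial `x ↦ ∏ j, x j ^ a j` as a multiplicative character of `ι → M`, so that
independence of characters applies to it. -/
def monomialHom (a : ι → ℕ) : (ι → M) →* M where
  toFun x := ∏ j, x j ^ a j
  map_one' := by simp
  map_mul' x y := by simp [mul_pow, Finset.prod_mul_distrib]

theorem monomialHom_apply (a : ι → ℕ) (x : ι → M) : monomialHom a x = ∏ j, x j ^ a j := rfl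

theorem monomialHom_injective {g : M} (hg : Function.Injective fun n : ℕ => g ^ n) :
    Function.Injective (monomialHom : (ι → ℕ) → (ι → M) →* M) := by
  classical
  intro a b hab
  have eval (c : ι → ℕ) (j : ι) : monomialHom c (Pi.mulSingle j g) = g ^ c j := by
    rw [monomialHom_apply, Fintype.prod_eq_single j fun k hk => by simp [hk], Pi.mulSingle_eq_same]
  funext j
  exact hg (by simpa only [eval] using DFunLike.congr_fun hab (Pi.mulSingle j g))

theorem coe_monomialHom_units (a : ι → ℕ) (u : ι → Mˣ) :
    ((monomialHom a u : Mˣ) : M) = monomialHom a fun j => (u j : M) := by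
  simp [monomialHom_apply]

theorem linearIndependent_monomialHom {R : Type*} [CommRing R] [IsDomain R] [CharZero R]
    {A : Matrix κ ι ℕ} (hA : Function.Injective A) :
    LinearIndependent R fun k => (monomialHom (A k) : (ι → R) → R) := by
  have two_pow_injective : Function.Injective fun n : ℕ => (2 : R) ^ n := fun m n hmn =>
    Nat.pow_right_injective le_rfl (by dsimp only at hmn ⊢; exact_mod_cast hmn)
  exact (linearIndependent_monoidHom (ι → R) R).comp _
    ((monomialHom_injective two_pow_injective).comp hA)

/-- The polynomial function `∑ k, c k * ∏ j, x j ^ A k j`: `wfun` with coefficients, and with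
the monomials indexed independently of the variables. The coefficients accommodate the signs
of `W`. -/
def delsarteFun [Fintype κ] (c : κ → ℂ) (A : Matrix κ ι ℕ) (x : ι → ℂ) : ℂ :=
  ∑ k, c k * monomialHom (A k) x

theorem mem_autP_delsarteFun_iff [Fintype κ] {c : κ → ℂ} {A : Matrix κ ι ℕ} (hc : ∀ k, c k ≠ 0)
    (hA : Function.Injective A) {lam : ι → ℂˣ} :
    lam ∈ autP (delsarteFun c A) ↔ ∀ k, monomialHom (A k) lam = 1 := by
  have scale (x : ι → ℂ) : delsarteFun c A (fun j => (lam j : ℂ) * x j) =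
      ∑ k, c k * ((monomialHom (A k) lam : ℂˣ) * monomialHom (A k) x) := by
    simp only [delsarteFun, coe_monomialHom_units, ← _root_.map_mul, Pi.mul_def]
  change (∀ x, delsarteFun c A (fun j => (lam j : ℂ) * x j) = delsarteFun c A x) ↔ _
  constructor
  · intro h k
    have relation : ∑ k, (c k * ((monomialHom (A k) lam : ℂˣ) - 1)) •
        (monomialHom (A k) : (ι → ℂ) → ℂ) = 0 := by
      funext x
      have hx := sub_eq_zero.2 (h x)
      rw [scale, delsarteFun, ← Finset.sum_sub_distrib] at hx
      rw [Finset.sum_apply, Pi.zero_apply, ← hx]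
      refine Finset.sum_congr rfl fun k _ => ?_
      rw [Pi.smul_apply, smul_eq_mul]
      ring
    have independent := linearIndependent_monomialHom (R := ℂ) hA
    have coeff_eq_zero := Fintype.linearIndependent_iff.1 independent _ relation k
    exact Units.ext (sub_eq_zero.1 ((mul_eq_zero.1 coeff_eq_zero).resolve_left (hc k)))
  · intro h x
    rw [scale]
    simp only [h, Units.val_one, one_mul, delsarteFun]

end Monomials

section Charges

theorem eU_intCast_mul (n : ℤ) (v : ℚ) : eU (n * v) = eU v ^ n := by
  ext
  rw [Units.val_zpow_eq_zpow_val]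
  simp only [eU, Units.val_mk0, ← Complex.exp_int_mul]
  congr 1
  push_cast
  ring

theorem isPrimitiveRoot_eU_inv (d : ℕ) [NeZero d] : IsPrimitiveRoot (eU (d : ℚ)⁻¹) d := by
  rw [← IsPrimitiveRoot.coe_units_iff]
  simpa [eU, div_eq_mul_inv] using Complex.isPrimitiveRoot_exp d (NeZero.ne d)

variable {ι : Type*}

theorem mem_JW_div_iff {w : ι → ℤ} {d : ℕ} [NeZero d] {lam : ι → ℂˣ} :
    lam ∈ JW (fun j => (w j : ℚ) / d) ↔ ∃ s : ℂˣ, s ^ d = 1 ∧ ∀ j, lam j = s ^ w j := by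
  have hζ := isPrimitiveRoot_eU_inv d
  set ζ := eU (d : ℚ)⁻¹
  have jW_zpow (k : ℤ) (j : ι) : (jW (fun j => (w j : ℚ) / d) ^ k) j = (ζ ^ k) ^ w j := by
    rw [Pi.pow_apply, jW, div_eq_mul_inv, eU_intCast_mul, zpow_comm]
  constructor
  · rintro ⟨k, rfl⟩
    refine ⟨ζ ^ k, ?_, jW_zpow k⟩
    rw [← zpow_natCast, zpow_comm, zpow_natCast, hζ.pow_eq_one, _root_.one_zpow]
  · rintro ⟨s, hs, hlam⟩
    obtain ⟨k, rfl⟩ : s ∈ Subgroup.zpowers ζ := by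
      rwa [hζ.zpowers_eq, _root_.mem_rootsOfUnity]
    exact ⟨k, funext fun j => (jW_zpow k j).trans (hlam j).symm⟩

end Charges

end BV

/-- The exponent matrix of `W`. -/
def exponents17 : Matrix (Fin 5) (Fin 5) ℕ :=
  !![4, 0, 0, 0, 0; 0, 4, 0, 0, 0; 0, 0, 5, 0, 0; 0, 0, 1, 5, 0; 0, 0, 0, 1, 6]

theorem P17_eq_delsarteFun : P17 = BV.delsarteFun ![1, 1, -1, -1, -1] exponents17 := by
  funext x
  simp only [P17, BV.delsarteFun, BV.monomialHom_apply, exponents17, Fin.sum_univ_five,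
    Fin.prod_univ_five, of_apply, cons_val', cons_val_fin_one, cons_val_zero, cons_val_one,
    cons_val]
  ring

theorem mem_slP_P17_iff (lam : Fin 5 → ℂˣ) :
    lam ∈ BV.slP P17 ↔
      (lam 0 ^ 4 = 1 ∧ lam 1 ^ 4 = 1 ∧ lam 2 ^ 5 = 1 ∧ lam 2 * lam 3 ^ 5 = 1 ∧
        lam 3 * lam 4 ^ 6 = 1 ∧ lam 0 * lam 1 * lam 2 * lam 3 * lam 4 = 1) := by
  have coeff_ne_zero : ∀ k, (![1, 1, -1, -1, -1] : Fin 5 → ℂ) k ≠ 0 := by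
    simp [Fin.forall_fin_succ]
  have exponents_injective : Function.Injective fun i => exponents17 i := by decide
  rw [BV.slP, Subgroup.mem_inf, P17_eq_delsarteFun,
    BV.mem_autP_delsarteFun_iff coeff_ne_zero exponents_injective, MonoidHom.mem_ker]
  simp [BV.monomialHom_apply, BV.prodHom, exponents17, Fin.forall_fin_succ, Fin.prod_univ_five,
    and_assoc]

theorem mem_JW_q17_iff {lam : Fin 5 → ℂˣ} :
    lam ∈ BV.JW q17 ↔ ∃ s : ℂˣ, s ^ 100 = 1 ∧
      lam 0 = s ^ 25 ∧ lam 1 = s ^ 25 ∧ lam 2 = s ^ 20 ∧ lam 3 = s ^ 16 ∧ lam 4 = s ^ 14 := by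
  have q17_eq : q17 = fun j => ((![25, 25, 20, 16, 14] : Fin 5 → ℤ) j : ℚ) / (100 : ℕ) := by
    funext j
    fin_cases j <;> rfl
  rw [q17_eq, BV.mem_JW_div_iff]
  simp [Fin.forall_fin_succ, zpow_ofNat]

section Coordinates

variable {lam : Fin 5 → ℂˣ}

theorem apply_two_eq_pow_of_mem_slP (h : lam ∈ BV.slP P17) : lam 2 = lam 4 ^ 30 := by
  obtain ⟨-, -, -, h3, h4, -⟩ := (mem_slP_P17_iff lam).1 h
  calc lam 2 = lam 2 * (lam 3 * lam 4 ^ 6) ^ 5 := by rw [h4, one_pow, mul_one]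
    _ = lam 2 * lam 3 ^ 5 * lam 4 ^ 30 := by rw [mul_pow, ← pow_mul, mul_assoc]
    _ = lam 4 ^ 30 := by rw [h3, one_mul]

theorem mul_mul_pow_eq_one_of_mem_slP (h : lam ∈ BV.slP P17) :
    lam 0 * lam 1 * lam 4 ^ 25 = 1 := by
  obtain ⟨-, -, -, -, h4, hdet⟩ := (mem_slP_P17_iff lam).1 h
  calc lam 0 * lam 1 * lam 4 ^ 25 = lam 0 * lam 1 * lam 4 ^ 25 * (lam 3 * lam 4 ^ 6) := by
        rw [h4, mul_one]
    _ = lam 0 * lam 1 * lam 4 ^ 30 * lam 3 * lam 4 := by ext; push_cast; ring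
    _ = 1 := by rw [← apply_two_eq_pow_of_mem_slP h, hdet]

theorem apply_four_pow_eq_one_of_mem_slP (h : lam ∈ BV.slP P17) : lam 4 ^ 50 = 1 := by
  obtain ⟨h0, h1, h2, -⟩ := (mem_slP_P17_iff lam).1 h
  have pow_150 : lam 4 ^ 150 = 1 := by
    rw [← h2, apply_two_eq_pow_of_mem_slP h, ← pow_mul]
  have pow_100 : lam 4 ^ 100 = 1 := by
    calc lam 4 ^ 100 = (lam 0 * lam 1 * lam 4 ^ 25) ^ 4 := by
          rw [mul_pow, mul_pow, h0, h1, one_mul, one_mul, ← pow_mul]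
      _ = 1 := by rw [mul_mul_pow_eq_one_of_mem_slP h, one_pow]
  exact pow_gcd_eq_one.2 ⟨pow_150, pow_100⟩

theorem mem_JW_q17_of_mem_slP (hlam : lam ∈ BV.slP P17) (h01 : lam 0 = lam 1) :
    lam ∈ BV.JW q17 := by
  obtain ⟨h0, -, -, -, h34, -⟩ := (mem_slP_P17_iff lam).1 hlam
  have h2 := apply_two_eq_pow_of_mem_slP hlam
  have h014 := mul_mul_pow_eq_one_of_mem_slP hlam
  have h4 := apply_four_pow_eq_one_of_mem_slP hlam
  rw [← h01] at h014
  generalize ha : lam 0 = a at *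
  generalize ht : lam 4 = t at *
  -- The weights of `a` and `t` are `25` and `14`, and `3 * 25 + 9 * 14 ≡ 1 [MOD 100]`.
  have pow_25 : (a ^ 3 * t ^ 9) ^ 25 = a := calc
    (a ^ 3 * t ^ 9) ^ 25 = a * (a ^ 4) ^ 18 * (t ^ 50) ^ 4 * (a * a * t ^ 25) := by
      ext; push_cast; ring
    _ = a := by simp only [h0, h4, h014, one_pow, mul_one]
  have pow_14 : (a ^ 3 * t ^ 9) ^ 14 = t := calc
    (a ^ 3 * t ^ 9) ^ 14 = t * (a ^ 4) ^ 10 * (t ^ 50) ^ 2 * (a * a * t ^ 25) := by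
      ext; push_cast; ring
    _ = t := by simp only [h0, h4, h014, one_pow, mul_one]
  generalize a ^ 3 * t ^ 9 = s at *
  have pow_100 : s ^ 100 = 1 := by
    rw [← h0, ← pow_25, ← pow_mul]
  refine mem_JW_q17_iff.2 ⟨s, pow_100, ha.trans pow_25.symm, h01.symm.trans pow_25.symm, ?_, ?_,
    ht.trans pow_14.symm⟩
  · calc lam 2 = (s ^ 14) ^ 30 := by rw [h2, pow_14]
      _ = s ^ 20 * (s ^ 100) ^ 4 := by rw [← pow_mul, ← pow_mul, ← pow_add]
      _ = s ^ 20 := by rw [pow_100, one_pow, mul_one]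
  · have h16 : s ^ 16 * t ^ 6 = 1 := by
      rw [← pow_14, ← pow_mul, ← pow_add, pow_100]
    exact mul_right_cancel (h34.trans h16.symm)

end Coordinates

/-- The character `diag(a₁, a₂, b₁, b₂, b₃) ↦ a₁ / a₂`, whose restriction to `SL(W)` has kernel
`J_W` and image `{±1}`. -/
def entryRatio : (Fin 5 → ℂˣ) →* ℂˣ :=
  Pi.evalMonoidHom (fun _ => ℂˣ) 0 / Pi.evalMonoidHom (fun _ => ℂˣ) 1

theorem entryRatio_apply (lam : Fin 5 → ℂˣ) : entryRatio lam = lam 0 / lam 1 := rfl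

theorem JW_q17_le_slP : BV.JW q17 ≤ BV.slP P17 := by
  intro lam hlam
  obtain ⟨s, hs, h0, h1, h2, h3, h4⟩ := mem_JW_q17_iff.1 hlam
  rw [mem_slP_P17_iff, h0, h1, h2, h3, h4]
  simp only [← pow_mul, ← pow_add, Nat.reduceMul, Nat.reduceAdd, hs, and_self]

theorem JW_q17_eq_inf_ker : BV.JW q17 = BV.slP P17 ⊓ entryRatio.ker := by
  ext lam
  rw [Subgroup.mem_inf, MonoidHom.mem_ker, entryRatio_apply, div_eq_one]
  constructor
  · intro hlam
    obtain ⟨s, -, h0, h1, -⟩ := mem_JW_q17_iff.1 hlam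
    exact ⟨JW_q17_le_slP hlam, h0.trans h1.symm⟩
  · rintro ⟨hlam, h01⟩
    exact mem_JW_q17_of_mem_slP hlam h01

theorem nu17_mem_slP : nu17 ∈ BV.slP P17 := by
  have iu_pow_four : iu ^ 4 = 1 := Units.ext I_pow_four
  have iu_mul_self : iu * iu = -1 := Units.ext I_mul_I
  have even_four : Even 4 := by decide
  simp [mem_slP_P17_iff, nu17, even_four.neg_pow, iu_pow_four, iu_mul_self]

theorem entryRatio_nu17 : entryRatio nu17 = -1 := by
  simp [entryRatio_apply, nu17, div_neg]

theorem map_entryRatio_slP : (BV.slP P17).map entryRatio = rootsOfUnity 2 ℂ := by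
  apply le_antisymm
  · rintro _ ⟨lam, hlam, rfl⟩
    obtain ⟨-, h1, -⟩ := (mem_slP_P17_iff lam).1 hlam
    rw [_root_.mem_rootsOfUnity, entryRatio_apply, div_pow, div_eq_one]
    calc lam 0 ^ 2 = lam 0 ^ 2 * (lam 1 ^ 4 * lam 4 ^ 50) := by
          rw [h1, apply_four_pow_eq_one_of_mem_slP hlam, mul_one, mul_one]
      _ = (lam 0 * lam 1 * lam 4 ^ 25) ^ 2 * lam 1 ^ 2 := by ext; push_cast; ring
      _ = lam 1 ^ 2 := by rw [mul_mul_pow_eq_one_of_mem_slP hlam, one_pow, one_mul]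
  · have neg_one_primitive : IsPrimitiveRoot (-1 : ℂˣ) 2 :=
      IsPrimitiveRoot.coe_units_iff.1 (IsPrimitiveRoot.neg_one 0 (by norm_num))
    rw [← neg_one_primitive.zpowers_eq, Subgroup.zpowers_le]
    exact ⟨nu17, nu17_mem_slP, entryRatio_nu17⟩

theorem relIndex_JW_q17_slP : (BV.JW q17).relIndex (BV.slP P17) = 2 := by
  rw [JW_q17_eq_inf_ker, Subgroup.inf_relIndex_left, Subgroup.relIndex_ker, map_entryRatio_slP,
    Complex.card_rootsOfUnity]

theorem nu17_notMem_JW : nu17 ∉ BV.JW q17 := by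
  rw [JW_q17_eq_inf_ker, Subgroup.mem_inf, MonoidHom.mem_ker, entryRatio_nu17]
  rintro ⟨-, h⟩
  exact absurd (congrArg Units.val h) (by norm_num)

/-- for `W = x₁⁴ + x₂⁴ − y₁⁵ − y₁y₂⁵ − y₂y₃⁶` (weights `(25,25,20,16,14)`,
degree `100`), `SL(W)` is the group of diagonal matrices `diag(a₁,a₂,b₁,b₂,b₃)` with
`a₁⁴ = a₂⁴ = b₁⁵ = 1`, `b₁b₂⁵ = 1`, `b₂b₃⁶ = 1`, `a₁a₂b₁b₂b₃ = 1`, and the quotient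
`S̃L(W) = SL(W)/J_W` has order `2`, generated by the class of `ν = diag(i,−i,1,1,1)`. -/
theorem example_BV_transposed :
    (∀ lam : Fin 5 → ℂˣ,
      lam ∈ BV.slP P17 ↔
        (lam 0 ^ 4 = 1 ∧ lam 1 ^ 4 = 1 ∧ lam 2 ^ 5 = 1 ∧ lam 2 * lam 3 ^ 5 = 1 ∧
          lam 3 * lam 4 ^ 6 = 1 ∧ lam 0 * lam 1 * lam 2 * lam 3 * lam 4 = 1))
    ∧ Nat.card (BV.slP P17 ⧸ (BV.JW q17).subgroupOf (BV.slP P17)) = 2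
    ∧ ∃ h : nu17 ∈ BV.slP P17,
        ∀ x : BV.slP P17 ⧸ (BV.JW q17).subgroupOf (BV.slP P17),
          ∃ k : ℤ, x = (QuotientGroup.mk (⟨nu17, h⟩ : BV.slP P17)) ^ k := by
  have card_quotient : Nat.card (BV.slP P17 ⧸ (BV.JW q17).subgroupOf (BV.slP P17)) = 2 :=
    relIndex_JW_q17_slP
  refine ⟨mem_slP_P17_iff, card_quotient, nu17_mem_slP, fun x => ?_⟩
  have nu_class_ne_one : (QuotientGroup.mk ⟨nu17, nu17_mem_slP⟩ :
      BV.slP P17 ⧸ (BV.JW q17).subgroupOf (BV.slP P17)) ≠ 1 := by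
    rw [Ne, QuotientGroup.eq_one_iff, Subgroup.mem_subgroupOf]
    exact nu17_notMem_JW
  obtain ⟨k, hk⟩ := mem_zpowers_of_prime_card (g' := x) card_quotient nu_class_ne_one
  exact ⟨k, hk.symm⟩
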